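/- arXiv:1104.4503 — 3 statements merged into one kernel-verified Lean document; each statement's English description precedes it below -/
import Mathlib

section
/- Let s ≥ 3 and let r_1 ≥ r_2 ≥ … ≥ r_s ≥ 2 be integers each dividing 4, and let G be an elementary abelian 2-group of order r_1·r_2⋯r_s. Then every logarithmic signature for G of type (r_1,…,r_s) has at least one periodic block; i.e., there is no aperiodic logarithmic signature for G of type (r_1,…,r_s). -/
/-- A subset `B` of a group is periodic if some `g ≠ 1` satisfies `g • B = B`. -/
def IsPeriodic {G : Type*} [Group G] [DecidableEq G] (B : Finset G) : Prop :=
  ∃ g : G, g ≠ 1 ∧ B.image (fun b => g * b) = B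

/-- `B` is a logarithmic signature for `G`: every element of `G` has a unique ordered
factorization with one factor from each block. -/
def IsLogSig {G : Type*} [Group G] {s : ℕ} (B : Fin s → Finset G) : Prop :=
  ∀ g : G, ∃! f : Fin s → G, (∀ i, f i ∈ B i) ∧ (List.ofFn f).prod = g

/-- The coordinate vectors of even weight. -/
def EvenWeight (v : Fin 4 → ZMod 2) : Prop := ∑ m, v m = 0

instance : DecidablePred EvenWeight := fun v => inferInstanceAs (Decidable (∑ m, v m = 0))

lemma EvenWeight.add {u v : Fin 4 → ZMod 2} (hu : EvenWeight u) (hv : EvenWeight v) :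
    EvenWeight (u + v) := by
  unfold EvenWeight at *
  simp [Finset.sum_add_distrib, hu, hv]

lemma EvenWeight.exists_eq_single_add_single : ∀ v : Fin 4 → ZMod 2, EvenWeight v → v ≠ 1 →
    ∃ p q : Fin 4, v = Pi.single p 1 + Pi.single q 1 := by
  decide +kernel

lemma evenWeight_single_add_single : ∀ p q : Fin 4,
    EvenWeight (Pi.single p 1 + Pi.single q 1) ∧
      (Pi.single p 1 + Pi.single q 1 : Fin 4 → ZMod 2) ≠ 1 := by
  decide +kernel

lemma card_evenWeight_vanishing : ∀ k : Fin 4,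
    (Finset.univ.filter fun v : Fin 4 → ZMod 2 => EvenWeight v ∧ v k = 0).card = 4 := by
  decide +kernel

lemma card_image_single :
    (Finset.univ.image fun m : Fin 4 => (Pi.single m 1 : Fin 4 → ZMod 2)).card = 4 := by
  decide +kernel

lemma evenWeight_add_single_of_weight_three : ∀ m : Fin 4,
    EvenWeight (![1, 1, 1, 0] + Pi.single m 1) ∧
      (![1, 1, 1, 0] + Pi.single m 1 : Fin 4 → ZMod 2) ≠ 0 := by
  decide +kernel

lemma ne_one_of_apply_eq_zero {v : Fin 4 → ZMod 2} {k : Fin 4} (h : v k = 0) : v ≠ 1 := by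
  rintro rfl
  simp at h

lemma zmod_two_pi_add_self {κ : Type*} (v : κ → ZMod 2) : v + v = 0 := by
  funext k
  exact CharTwo.add_self_eq_zero (v k)

lemma eq_of_add_eq_zero_zmod_two {κ : Type*} {u v : κ → ZMod 2} (h : u + v = 0) : u = v := by
  funext k
  exact CharTwo.add_eq_zero.mp (congrFun h k)

/-- Let `Z` be an additively closed family of tuples of even-weight vectors in `𝔽₂⁴`. If every
nonzero member of `Z` has an all-ones coordinate, and for every `i` and `w` some member has
all-ones `i`-th coordinate and vanishes at position `w j` of each other coordinate `j`, then `Z`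
contains a tuple whose only nonzero coordinate is an all-ones vector. -/
theorem exists_single_one_mem {ι : Type*} [Fintype ι] [DecidableEq ι] [Nonempty ι]
    (Z : (ι → Fin 4 → ZMod 2) → Prop)
    (hadd : ∀ y z, Z y → Z z → Z (y + z))
    (hone : ∀ z, Z z → (∀ i, z i ≠ 1) → z = 0)
    (hex : ∀ (i : ι) (w : ι → Fin 4), ∃ z, Z z ∧ z i = 1 ∧ ∀ j, j ≠ i → z j (w j) = 0) :
    ∃ z i, Z z ∧ z i = 1 ∧ ∀ j, j ≠ i → z j = 0 := by
  have key : ∀ S : Finset ι, S.Nonempty → ∀ w : ι → Fin 4, ∃ z, Z z ∧ ∃ i ∈ S, z i = 1 ∧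
      (∀ j ∈ S, j ≠ i → z j = 0) ∧ ∀ j ∉ S, z j (w j) = 0 := by
    intro S
    induction S using Finset.strongInduction with
    | H S ih =>
    intro hS w
    by_cases hcard : S.card = 1
    · obtain ⟨i, rfl⟩ := Finset.card_eq_one.mp hcard
      obtain ⟨z, hz, hzi, hzj⟩ := hex i w
      refine ⟨z, hz, i, by simp, hzi, ?_, ?_⟩
      · intro j hj hji
        simp_all
      · intro j hj
        exact hzj j (by simpa using hj)
    by_contra hno
    have hno' : ∀ z, Z z → ∀ i ∈ S, z i = 1 → (∀ j ∈ S, j ≠ i → z j = 0) →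
        (∀ j ∉ S, z j (w j) = 0) → False :=
      fun z hz i hi h1 h2 h3 => hno ⟨z, hz, i, hi, h1, h2, h3⟩
    let Q : ι → ι → Fin 4 → (ι → Fin 4 → ZMod 2) → Prop := fun i j k z =>
      Z z ∧ j ≠ i ∧ z j = 1 ∧ (∀ l ∈ S, l ≠ i → l ≠ j → z l = 0) ∧ z i k = 0 ∧
        ∀ l ∉ S, z l (w l) = 0
    have hQ : ∀ i ∈ S, ∀ k, ∃ j ∈ S, ∃ z, Q i j k z := by
      intro i hi k
      have hne : (S.erase i).Nonempty := by
        rw [← Finset.card_pos, Finset.card_erase_of_mem hi]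
        have := hS.card_pos
        omega
      obtain ⟨z, hz, j, hj, h1, h2, h3⟩ :=
        ih (S.erase i) (Finset.erase_ssubset hi) hne (Function.update w i k)
      rw [Finset.mem_erase] at hj
      refine ⟨j, hj.2, z, hz, hj.1, h1, ?_, ?_, ?_⟩
      · intro l hl hli hlj
        exact h2 l (Finset.mem_erase.mpr ⟨hli, hl⟩) hlj
      · simpa using h3 i (by simp)
      · intro l hl
        have hli : l ≠ i := fun h => hl (h ▸ hi)
        simpa [Function.update_of_ne hli] using h3 l (by simp [hl])
    have hQne : ∀ i j k z, j ∈ S → Q i j k z → z i ≠ 0 := by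
      rintro i j k z hj ⟨hz, hji, h1, h2, h3, h4⟩ h0
      refine hno' z hz j hj h1 ?_ h4
      intro l hl hlj
      by_cases hli : l = i
      · exact hli ▸ h0
      · exact h2 l hl hli hlj
    classical
    have hcount := Finset.card_mul_le_card_mul (s := S) (t := S) (m := 2) (n := 1)
      (fun i j => ∃ k z, Q i j k z) ?_ ?_
    · have := hS.card_pos
      omega
    · intro i hi
      obtain ⟨j, hj, z, hz⟩ := hQ i hi 0
      obtain ⟨k, hk⟩ := Function.ne_iff.mp (hQne i j 0 z hj hz)
      obtain ⟨j', hj', z', hz'⟩ := hQ i hi k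
      have hjj : j ≠ j' := by
        rintro rfl
        have hzz : Z (z + z') := hadd _ _ hz.1 hz'.1
        have hS0 : ∀ l ∈ S, l ≠ i → (z + z') l = 0 := by
          intro l hl hli
          by_cases hlj : l = j
          · subst hlj
            simp only [Pi.add_apply, hz.2.2.1, hz'.2.2.1]
            exact zmod_two_pi_add_self _
          · simp [hz.2.2.2.1 l hl hli hlj, hz'.2.2.2.1 l hl hli hlj]
        have hw0 : ∀ l ∉ S, (z + z') l (w l) = 0 := by
          intro l hl
          simp [hz.2.2.2.2.2 l hl, hz'.2.2.2.2.2 l hl]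
        by_cases h1 : (z + z') i = 1
        · exact hno' _ hzz i hi h1 hS0 hw0
        · have h0 := hone _ hzz (by
            intro l
            by_cases hl : l ∈ S
            · by_cases hli : l = i
              · exact hli ▸ h1
              · rw [hS0 l hl hli]
                exact zero_ne_one
            · exact ne_one_of_apply_eq_zero (hw0 l hl))
          have := congrFun (congrFun h0 i) k
          simp only [Pi.add_apply, hz'.2.2.2.2.1, add_zero] at this
          exact hk this
      refine (Finset.card_pair hjj).ge.trans (Finset.card_le_card ?_)
      intro l hl
      rw [Finset.mem_bipartiteAbove]
      rcases Finset.mem_insert.mp hl with rfl | hl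
      · exact ⟨hj, 0, z, hz⟩
      · obtain rfl := Finset.mem_singleton.mp hl
        exact ⟨hj', k, z', hz'⟩
    · intro j hj
      rw [Finset.card_le_one]
      intro i hi i' hi'
      rw [Finset.mem_bipartiteBelow] at hi hi'
      obtain ⟨hi, k, z, hz⟩ := hi
      obtain ⟨hi', k', z', hz'⟩ := hi'
      by_contra hii
      have h0 := hone _ (hadd _ _ hz.1 hz'.1) (by
        intro l
        by_cases hl : l ∈ S
        · by_cases hlj : l = j
          · subst hlj
            simp only [Pi.add_apply, hz.2.2.1, hz'.2.2.1, zmod_two_pi_add_self]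
            exact zero_ne_one
          by_cases hli : l = i
          · subst hli
            rw [Pi.add_apply, hz'.2.2.2.1 l hl hii hlj, add_zero]
            exact ne_one_of_apply_eq_zero hz.2.2.2.2.1
          · rw [Pi.add_apply, hz.2.2.2.1 l hl hli hlj, zero_add]
            by_cases hli' : l = i'
            · subst hli'
              exact ne_one_of_apply_eq_zero hz'.2.2.2.2.1
            · rw [hz'.2.2.2.1 l hl hli' hlj]
              exact zero_ne_one
        · exact ne_one_of_apply_eq_zero (k := w l)
            (by simp [hz.2.2.2.2.2 l hl, hz'.2.2.2.2.2 l hl]))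
      have hzi := congrFun h0 i
      rw [Pi.add_apply, hz'.2.2.2.1 i hi hii hz.2.1.symm, add_zero] at hzi
      exact hQne i j k z hj hz hzi
  obtain ⟨z, hz, i, -, h1, h2, -⟩ := key Finset.univ Finset.univ_nonempty (fun _ => 0)
  exact ⟨z, i, hz, h1, fun j hj => h2 j (Finset.mem_univ j) hj⟩

/-- A vector space over `𝔽₂` that is a direct sum of four-element families has a family whose
elements sum to zero. -/
theorem exists_sum_eq_zero_of_factorization {ι V : Type*} [Fintype ι] [DecidableEq ι] [Nonempty ι]
    [AddCommGroup V] [Fintype V] [Module (ZMod 2) V]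
    (hcard : Fintype.card V = 4 ^ Fintype.card ι) (x : ι → Fin 4 → V)
    (hinj : ∀ p q : ι → Fin 4, ∑ i, x i (p i) = ∑ i, x i (q i) → p = q) :
    ∃ i, ∑ m, x i m = 0 := by
  classical
  let L : (ι → Fin 4 → ZMod 2) → V := fun c => ∑ i, ∑ m, c i m • x i m
  have hLadd : ∀ c d, L (c + d) = L c + L d := by
    intro c d
    simp [L, add_smul, Finset.sum_add_distrib]
  have hVself : ∀ v : V, v + v = 0 := by
    intro v
    have h : (1 + 1 : ZMod 2) • v = 0 := by
      rw [CharTwo.add_self_eq_zero, zero_smul]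
    simpa [add_smul] using h
  have hLsingle : ∀ p : ι → Fin 4, L (fun i => Pi.single (p i) 1) = ∑ i, x i (p i) := by
    intro p
    simp [L, Pi.single_apply, ite_smul]
  let Z : (ι → Fin 4 → ZMod 2) → Prop := fun z => (∀ i, EvenWeight (z i)) ∧ L z = 0
  have hZone : ∀ z, Z z → (∀ i, z i ≠ 1) → z = 0 := by
    rintro z ⟨hev, hz⟩ h1
    choose p q hpq using fun i => (hev i).exists_eq_single_add_single _ (h1 i)
    have hzpq : z = (fun i => Pi.single (p i) 1) + fun i => Pi.single (q i) 1 := funext hpq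
    rw [hzpq, hLadd, hLsingle, hLsingle] at hz
    have hp : p = q := hinj p q (by
      rw [add_eq_zero_iff_eq_neg] at hz
      rw [hz, neg_eq_iff_add_eq_zero]
      exact hVself _)
    rw [hzpq, hp]
    funext i
    exact zmod_two_pi_add_self _
  have hZex : ∀ (i : ι) (w : ι → Fin 4), ∃ z, Z z ∧ z i = 1 ∧ ∀ j, j ≠ i → z j (w j) = 0 := by
    intro i w
    let C : ι → Finset (Fin 4 → ZMod 2) := fun j =>
      if j = i then Finset.univ.image fun m : Fin 4 => Pi.single m 1
      else Finset.univ.filter fun v => EvenWeight v ∧ v (w j) = 0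
    have hCcard : (Fintype.piFinset C).card = (Finset.univ : Finset V).card := by
      rw [Fintype.card_piFinset, Finset.card_univ, hcard, Finset.prod_eq_pow_card (b := 4)]
      · rfl
      · intro j _
        by_cases hj : j = i
        · simp only [C, if_pos hj]
          exact card_image_single
        · simp only [C, if_neg hj]
          exact card_evenWeight_vanishing (w j)
    have hCdiff : ∀ j, ∀ u ∈ C j, ∀ v ∈ C j, EvenWeight (u + v) ∧ u + v ≠ 1 := by
      intro j u hu v hv
      by_cases hj : j = i
      · simp only [C, if_pos hj, Finset.mem_image, Finset.mem_univ, true_and] at hu hv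
        obtain ⟨p, rfl⟩ := hu
        obtain ⟨q, rfl⟩ := hv
        exact evenWeight_single_add_single p q
      · simp only [C, if_neg hj, Finset.mem_filter, Finset.mem_univ, true_and] at hu hv
        exact ⟨hu.1.add hv.1, ne_one_of_apply_eq_zero (k := w j) (by simp [hu.2, hv.2])⟩
    have hLinj : Set.InjOn L (Fintype.piFinset C) := by
      intro c hc d hd hcd
      rw [Finset.mem_coe, Fintype.mem_piFinset] at hc hd
      have h := hZone (c + d)
        ⟨fun j => (hCdiff j _ (hc j) _ (hd j)).1, by rw [hLadd, hcd, hVself]⟩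
        (fun j => (hCdiff j _ (hc j) _ (hd j)).2)
      funext j
      exact eq_of_add_eq_zero_zmod_two (congrFun h j)
    have hLimage : (Fintype.piFinset C).image L = Finset.univ :=
      Finset.eq_univ_of_card _ (by rw [Finset.card_image_of_injOn hLinj, hCcard, Finset.card_univ])
    let e : ι → Fin 4 → ZMod 2 := Pi.single i ![1, 1, 1, 0]
    obtain ⟨c, hc, hLc⟩ := Finset.mem_image.mp (hLimage ▸ Finset.mem_univ (L e))
    rw [Fintype.mem_piFinset] at hc
    have hci := hc i
    simp only [C, if_true, Finset.mem_image, Finset.mem_univ, true_and] at hci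
    obtain ⟨m, hm⟩ := hci
    have hcj : ∀ j, j ≠ i → EvenWeight (c j) ∧ c j (w j) = 0 := by
      intro j hj
      simpa [C, if_neg hj] using hc j
    have hei : (e + c) i = ![1, 1, 1, 0] + Pi.single m 1 := by simp [e, hm]
    have hej : ∀ j, j ≠ i → (e + c) j = c j := by
      intro j hj
      simp [e, Pi.single_eq_of_ne hj]
    have hZe : Z (e + c) := by
      refine ⟨fun j => ?_, by rw [hLadd, hLc, hVself]⟩
      by_cases hj : j = i
      · rw [hj, hei]
        exact (evenWeight_add_single_of_weight_three m).1
      · rw [hej j hj]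
        exact (hcj j hj).1
    refine ⟨e + c, hZe, ?_, fun j hj => by rw [hej j hj]; exact (hcj j hj).2⟩
    by_contra hne
    have h0 := hZone _ hZe (by
      intro j
      by_cases hj : j = i
      · rwa [hj]
      · rw [hej j hj]
        exact ne_one_of_apply_eq_zero (hcj j hj).2)
    exact (evenWeight_add_single_of_weight_three m).2 (by rw [← hei, h0, Pi.zero_apply])
  obtain ⟨z, i, ⟨-, hz⟩, h1, h0⟩ := exists_single_one_mem Z
    (fun y z hy hz => ⟨fun i => (hy.1 i).add (hz.1 i), by rw [hLadd, hy.2, hz.2, add_zero]⟩)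
    hZone hZex
  refine ⟨i, ?_⟩
  have hLz : L z = ∑ m, z i m • x i m :=
    Finset.sum_eq_single i (fun j _ hj => by simp [h0 j hj]) (by simp)
  rw [← hz, hLz, h1]
  simp

lemma isPeriodic_of_mul_mem {G : Type*} [Group G] [DecidableEq G] {B : Finset G} {g : G}
    (hg : g ≠ 1) (h : ∀ b ∈ B, g * b ∈ B) : IsPeriodic B := by
  refine ⟨g, hg, Finset.eq_of_subset_of_card_le ?_ ?_⟩
  · intro y hy
    obtain ⟨b, hb, rfl⟩ := Finset.mem_image.mp hy
    exact h b hb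
  · rw [Finset.card_image_of_injective _ (mul_right_injective g)]

/-- In an elementary abelian 2-group of order `r₁ ⋯ r_s` with `s ≥ 3`,
`r₁ ≥ ⋯ ≥ r_s ≥ 2` and every `r_i ∣ 4`, every logarithmic signature of type
`(r₁, …, r_s)` has a periodic block. -/
theorem stmt3 {G : Type*} [Group G] [Fintype G] [DecidableEq G]
    (hG : ∀ g : G, g * g = 1)
    (s : ℕ) (hs : 3 ≤ s) (r : Fin s → ℕ)
    (hanti : ∀ i j : Fin s, i ≤ j → r j ≤ r i)
    (h2 : ∀ i, 2 ≤ r i) (hdvd : ∀ i, r i ∣ 4)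
    (hcard : Fintype.card G = ∏ i, r i)
    (B : Fin s → Finset G) (hB : IsLogSig B)
    (htype : ∀ i, (B i).card = r i) :
    ∃ i, IsPeriodic (B i) := by
  have hcomm : ∀ a b : G, a * b = b * a := fun a b => by
    have hinv : ∀ g : G, g⁻¹ = g := fun g => inv_eq_of_mul_eq_one_left (hG g)
    rw [← hinv (a * b), mul_inv_rev, hinv, hinv]
  by_cases hr : ∃ i, r i = 2
  · obtain ⟨i, hi⟩ := hr
    obtain ⟨a, b, hab, hBi⟩ := Finset.card_eq_two.mp ((htype i).trans hi)
    refine ⟨i, isPeriodic_of_mul_mem (g := a * b) ?_ ?_⟩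
    · intro h
      exact hab (mul_right_cancel (h.trans (hG b).symm))
    · rw [hBi]
      intro y hy
      rcases Finset.mem_insert.mp hy with rfl | hy
      · rw [hcomm, ← mul_assoc, hG, one_mul]
        simp
      · obtain rfl := Finset.mem_singleton.mp hy
        rw [mul_assoc, hG, mul_one]
        simp
  have hr4 : ∀ i, r i = 4 := by
    intro i
    have hle := Nat.le_of_dvd (by norm_num) (hdvd i)
    have hd := hdvd i
    have h2i := h2 i
    have hne : r i ≠ 2 := fun h => hr ⟨i, h⟩
    interval_cases r i <;> omega
  let _ : CommGroup G := { ‹Group G› with mul_comm := hcomm }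
  let _ : Module (ZMod 2) (Additive G) := AddCommGroup.zmodModule (n := 2) fun v => by
    rw [two_nsmul]
    exact hG v.toMul
  have : Nonempty (Fin s) := ⟨⟨0, by omega⟩⟩
  let E : ∀ i, Fin 4 ≃ B i := fun i =>
    (finCongr ((htype i).trans (hr4 i)).symm).trans (B i).equivFin.symm
  obtain ⟨i, hi⟩ := exists_sum_eq_zero_of_factorization (ι := Fin s) (V := Additive G)
    (by
      rw [Fintype.card_congr Additive.toMul, hcard]
      simp [hr4])
    (fun i m => Additive.ofMul (E i m : G)) (by
      intro p q hpq
      obtain ⟨f, -, hf⟩ := hB (∏ i, (E i (q i) : G))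
      have hp := hf (fun i => (E i (p i) : G)) ⟨fun i => (E i (p i)).2, by
        rw [List.prod_ofFn]
        exact hpq⟩
      have hq := hf (fun i => (E i (q i) : G)) ⟨fun i => (E i (q i)).2, List.prod_ofFn⟩
      funext i
      exact (E i).injective (Subtype.ext (congrFun (hp.trans hq.symm) i)))
  have hprod : (E i 0 : G) * E i 1 * E i 2 * E i 3 = 1 := by
    rw [Fin.sum_univ_four] at hi
    exact hi
  have hG' : ∀ a b : G, a * b = 1 → a = b := fun a b h => mul_right_cancel (h.trans (hG b).symm)
  have h01 : (E i 0 : G) * E i 1 * E i 0 = E i 1 := by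
    rw [hcomm, ← mul_assoc, hG, one_mul]
  have h11 : (E i 0 : G) * E i 1 * E i 1 = E i 0 := by rw [mul_assoc, hG, mul_one]
  have h21 : (E i 0 : G) * E i 1 * E i 2 = E i 3 := hG' _ _ hprod
  have h31 : (E i 0 : G) * E i 1 * E i 3 = E i 2 := by
    rw [← h21, ← mul_assoc, hG, one_mul]
  refine ⟨i, isPeriodic_of_mul_mem (g := (E i 0 : G) * E i 1) ?_ ?_⟩
  · intro h
    have := (E i).injective (Subtype.ext (hG' _ _ h))
    exact absurd this (by decide)
  · intro b hb
    obtain ⟨m, hm⟩ := (E i).surjective ⟨b, hb⟩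
    obtain rfl : (E i m : G) = b := congrArg Subtype.val hm
    fin_cases m
    · exact Set.mem_of_eq_of_mem h01 (E i 1).2
    · exact Set.mem_of_eq_of_mem h11 (E i 0).2
    · exact Set.mem_of_eq_of_mem h21 (E i 3).2
    · exact Set.mem_of_eq_of_mem h31 (E i 2).2
end

section
/- Let r_1 ≥ r_2 ≥ 8 be integers and let G be an elementary abelian 2-group of order r_1·r_2. Then there exists an aperiodic logarithmic signature [B_1, B_2] for G of type (r_1, r_2). -/
/-- Two parametrized families whose products run bijectively through `G` form a logarithmic
signature. -/
theorem isLogSig_pair_of_bijective {G S T : Type*} [Group G] [DecidableEq G] [Fintype S]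
    [Fintype T] (α : S → G) (β : T → G)
    (h : Function.Bijective fun p : S × T => α p.1 * β p.2) :
    IsLogSig ![Finset.univ.image α, Finset.univ.image β] := by
  intro g
  obtain ⟨⟨s, t⟩, hst⟩ := h.2 g
  refine ⟨![α s, β t], ⟨?_, ?_⟩, ?_⟩
  · intro i
    fin_cases i <;> simp
  · simpa using hst
  · rintro k ⟨hk, hprod⟩
    have h0 := hk 0
    have h1 := hk 1
    simp only [Matrix.cons_val_zero, Matrix.cons_val_one, Finset.mem_image, Finset.mem_univ,
      true_and] at h0 h1
    obtain ⟨s', hs⟩ := h0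
    obtain ⟨t', ht⟩ := h1
    have hg : α s' * β t' = g := by
      rw [hs, ht, ← hprod]
      simp
    have hp : (s', t') = (s, t) := h.1 (hg.trans hst.symm)
    obtain ⟨rfl, rfl⟩ := Prod.mk.inj hp
    funext i
    fin_cases i
    · exact hs.symm
    · exact ht.symm

/-- The elementary abelian group of order `8`, written additively. -/
abbrev Octet : Type := ZMod 2 × ZMod 2 × ZMod 2

/-- The shear sending `(x, a, b)` with `x = 0` to `(0, a, b)`, and everything else to `0`. -/
def shearLeft (x : Octet) : Octet := (0, (1 + x.1) * x.2.1, (1 + x.1) * x.2.2)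

/-- The shear sending `(y, a, b)` with `y = 1` to `(0, a + b, a)`, and everything else to `0`. -/
def shearRight (y : Octet) : Octet := (0, y.1 * (y.2.1 + y.2.2), y.1 * y.2.1)

/-- A map has no period: no nonzero shift of the argument acts as a shift of the value. -/
def AperiodicMap {X Y : Type*} [AddCommGroup X] [AddCommGroup Y] (f : X → Y) : Prop :=
  ∀ u v, (∀ x, f (u + x) = v + f x) → u = 0

theorem aperiodicMap_shearLeft : AperiodicMap shearLeft := by
  unfold AperiodicMap
  decide +kernel

theorem aperiodicMap_shearRight : AperiodicMap shearRight := by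
  unfold AperiodicMap
  decide +kernel

theorem injective_shear :
    Function.Injective fun p : Octet × Octet =>
      (p.1 + shearRight p.2, shearLeft p.1 + p.2) := by
  unfold Function.Injective
  decide +kernel

/-- Extend `f` by zero off the coset `X × {0}`. -/
def extendByZero {X Y P : Type*} [Zero Y] [Zero P] [DecidableEq P] (f : X → Y) (p : X × P) : Y :=
  if p.2 = 0 then f p.1 else 0

theorem AperiodicMap.extendByZero {X Y P : Type*} [AddCommGroup X] [AddCommGroup Y]
    [AddCommGroup P] [DecidableEq P] [Nontrivial X] {f : X → Y} (hf : AperiodicMap f) :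
    AperiodicMap (extendByZero (P := P) f) := by
  rintro ⟨u, w⟩ v h
  by_cases hw : w = 0
  · subst hw
    have : u = 0 := hf u v fun x => by simpa [_root_.extendByZero] using h (x, 0)
    simp [this]
  · exfalso
    have hc : ∀ x, f x = -v := fun x => by
      have := h (x, 0)
      simp [_root_.extendByZero, hw] at this
      exact (neg_eq_of_add_eq_zero_right this.symm).symm
    obtain ⟨x, hx⟩ := exists_ne (0 : X)
    exact hx (hf x 0 fun y => by simp [hc])

/-- The image in `G` of the graph of an aperiodic map is not periodic. -/
theorem not_isPeriodic_image_graph {G X Y W : Type*} [Group G] [DecidableEq G] [Fintype X]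
    [AddCommGroup X] [AddCommGroup Y] [AddCommGroup W] (φ : G ≃* Multiplicative W)
    (e : W ≃+ X × Y) (f : X → Y) (hf : AperiodicMap f) :
    ¬ IsPeriodic (Finset.univ.image fun x => φ.symm (Multiplicative.ofAdd (e.symm (x, f x)))) := by
  rintro ⟨g, hg, hB⟩
  obtain ⟨⟨u, v⟩, rfl⟩ : ∃ p, φ.symm (Multiplicative.ofAdd (e.symm p)) = g :=
    ⟨e (φ g).toAdd, by simp⟩
  have key : ∀ x, f (u + x) = v + f x := by
    intro x
    have hx : φ.symm (Multiplicative.ofAdd (e.symm (u, v))) *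
        φ.symm (Multiplicative.ofAdd (e.symm (x, f x))) ∈
        Finset.univ.image fun x => φ.symm (Multiplicative.ofAdd (e.symm (x, f x))) := by
      rw [← hB]
      exact Finset.mem_image_of_mem _ (Finset.mem_image_of_mem _ (Finset.mem_univ x))
    rw [← map_mul, ← ofAdd_add, ← map_add] at hx
    simp only [Finset.mem_image, Finset.mem_univ, true_and, EmbeddingLike.apply_eq_iff_eq,
      Prod.mk_add_mk, Prod.mk.injEq] at hx
    obtain ⟨z, hz, hz'⟩ := hx
    rw [← hz, hz']
  have hu := hf u v key
  subst hu
  have hv : v = 0 := by simpa using key 0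
  subst hv
  apply hg
  rw [show ((0 : X), (0 : Y)) = 0 from rfl]
  simp

theorem injective_extendByZero_shear {P Q : Type*} [AddCommGroup P] [AddCommGroup Q]
    [DecidableEq P] [DecidableEq Q] :
    Function.Injective fun p : (Octet × P) × (Octet × Q) =>
      ((p.1, (extendByZero shearLeft p.1, 0)) + ((extendByZero shearRight p.2, 0), p.2) :
        (Octet × P) × (Octet × Q)) := by
  rintro ⟨⟨x, p⟩, ⟨y, q⟩⟩ ⟨⟨x', p'⟩, ⟨y', q'⟩⟩ h
  simp only [Prod.mk_add_mk, Prod.mk.injEq, add_zero, zero_add] at h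
  obtain ⟨⟨h1, rfl⟩, h2, rfl⟩ := h
  by_cases hp : p = 0 <;> by_cases hq : q = 0 <;> simp only [extendByZero, hp, hq, if_true,
    if_false, add_zero, zero_add] at h1 h2
  · obtain ⟨rfl, rfl⟩ := Prod.mk.inj (injective_shear (a₁ := (x, y)) (a₂ := (x', y'))
      (Prod.ext h1 h2))
    rfl
  · subst h1
    rw [add_left_cancel h2]
  · subst h2
    rw [add_right_cancel h1]
  · rw [h1, h2]

/-- Elementary abelian 2-groups are vector spaces over `ZMod 2`, so they are isomorphic as soon as
they have the same order. -/
theorem exists_mulEquiv_of_mul_self {G W : Type*} [Group G] [Fintype G]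
    (hG : ∀ g : G, g * g = 1) [AddCommGroup W] [Module (ZMod 2) W] [Fintype W]
    (h : Fintype.card G = Fintype.card W) : Nonempty (G ≃* Multiplicative W) := by
  let _ : CommGroup G :=
    { ‹Group G› with
      mul_comm := fun a b => by
        have h1 : ∀ g : G, g⁻¹ = g := fun g => inv_eq_of_mul_eq_one_right (hG g)
        have := h1 (a * b)
        rw [mul_inv_rev, h1, h1] at this
        exact this.symm }
  let _ : Module (ZMod 2) (Additive G) :=
    AddCommGroup.zmodModule fun x => by
      rw [two_nsmul]
      exact hG x.toMul
  have h1 := Module.card_eq_pow_finrank (K := ZMod 2) (V := Additive G)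
  have h2 := Module.card_eq_pow_finrank (K := ZMod 2) (V := W)
  have hr : Module.finrank (ZMod 2) (Additive G) = Module.finrank (ZMod 2) W := by
    refine Nat.pow_right_injective le_rfl ?_
    simp only [ZMod.card] at h1 h2
    change 2 ^ _ = 2 ^ _
    rw [← h1, ← h2, ← h]
    exact Fintype.card_congr Additive.toMul
  obtain ⟨e⟩ := FiniteDimensional.nonempty_linearEquiv_of_finrank_eq hr
  exact ⟨AddEquiv.toMultiplicativeRight e.toAddEquiv⟩

/-- The order of a group of exponent two is a power of two. -/
theorem exists_card_eq_two_pow {G : Type*} [Group G] [Fintype G]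
    (hG : ∀ g : G, g * g = 1) : ∃ n, Fintype.card G = 2 ^ n := by
  have : IsPGroup 2 G := fun g => ⟨1, by rw [pow_one, pow_two, hG]⟩
  simpa [Nat.card_eq_fintype_card] using IsPGroup.iff_card.1 this

theorem exists_two_pow_add_three {r n : ℕ} (hr : r ∣ 2 ^ n) (h8 : 8 ≤ r) :
    ∃ p, r = 2 ^ 3 * 2 ^ p := by
  obtain ⟨a, -, rfl⟩ := (Nat.dvd_prime_pow Nat.prime_two).1 hr
  have ha : 3 ≤ a := (Nat.pow_le_pow_iff_right (a := 2) (by norm_num)).1 (by simpa using h8)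
  exact ⟨a - 3, by rw [← pow_add, Nat.add_sub_cancel' ha]⟩

/-- Every elementary abelian 2-group of order `r₁ r₂` with `r₁ ≥ r₂ ≥ 8` has an
aperiodic logarithmic signature of type `(r₁, r₂)`. -/
theorem stmt4 {G : Type*} [Group G] [Fintype G] [DecidableEq G]
    (hG : ∀ g : G, g * g = 1)
    (r₁ r₂ : ℕ) (h21 : r₂ ≤ r₁) (h8 : 8 ≤ r₂)
    (hcard : Fintype.card G = r₁ * r₂) :
    ∃ B : Fin 2 → Finset G, IsLogSig B ∧ (B 0).card = r₁ ∧ (B 1).card = r₂ ∧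
      ∀ i, ¬ IsPeriodic (B i) := by
  obtain ⟨n, hn⟩ := exists_card_eq_two_pow hG
  obtain ⟨p, hp⟩ := exists_two_pow_add_three (r := r₁) (n := n)
    ⟨r₂, by rw [← hn, hcard]⟩ (h8.trans h21)
  obtain ⟨q, hq⟩ := exists_two_pow_add_three (r := r₂) (n := n)
    ⟨r₁, by rw [← hn, hcard, mul_comm]⟩ h8
  let X := Octet × (Fin p → ZMod 2)
  let Y := Octet × (Fin q → ZMod 2)
  have hX : Fintype.card X = r₁ := by simp [X, hp, ZMod.card]
  have hY : Fintype.card Y = r₂ := by simp [Y, hq, ZMod.card]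
  obtain ⟨φ⟩ := exists_mulEquiv_of_mul_self (W := X × Y) hG
    (by rw [Fintype.card_prod, hX, hY, hcard])
  let f : X → Y := fun x => (extendByZero shearLeft x, 0)
  let g : Y → X := fun y => (extendByZero shearRight y, 0)
  have hf : AperiodicMap f := fun u v h =>
    aperiodicMap_shearLeft.extendByZero u v.1 fun x => congrArg Prod.fst (h x)
  have hg : AperiodicMap g := fun u v h =>
    aperiodicMap_shearRight.extendByZero u v.1 fun x => congrArg Prod.fst (h x)
  let α : X → G := fun x => φ.symm (Multiplicative.ofAdd (x, f x))
  let β : Y → G := fun y => φ.symm (Multiplicative.ofAdd (g y, y))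
  have hα : Function.Injective α := fun x x' h => by
    simpa [α] using congrArg (fun t => (φ t).toAdd.1) h
  have hβ : Function.Injective β := fun y y' h => by
    simpa [β] using congrArg (fun t => (φ t).toAdd.2) h
  have hbij : Function.Bijective fun s : X × Y => α s.1 * β s.2 := by
    refine (Fintype.bijective_iff_injective_and_card _).2 ⟨fun s t hst => ?_, ?_⟩
    · refine injective_extendByZero_shear ?_
      simpa only [α, β, ← map_mul, ← ofAdd_add, EmbeddingLike.apply_eq_iff_eq] using hst
    · rw [Fintype.card_prod, hX, hY, hcard]
  refine ⟨![Finset.univ.image α, Finset.univ.image β], isLogSig_pair_of_bijective α β hbij,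
    ?_, ?_, ?_⟩
  · simp [Finset.card_image_of_injective _ hα, hX]
  · simp [Finset.card_image_of_injective _ hβ, hY]
  · intro i
    fin_cases i
    · exact not_isPeriodic_image_graph φ (AddEquiv.refl _) f hf
    · exact not_isPeriodic_image_graph φ AddEquiv.prodComm g hg
end

section
/- Let s ≥ 3 and let r_1 ≥ r_2 ≥ … ≥ r_s ≥ 2 be integers with r_1 ≥ 8 and r_s ≥ 4, and let G be an elementary abelian 2-group of order r_1·r_2⋯r_s. Then there exists an aperiodic logarithmic signature for G of type (r_1,…,r_s). -/
theorem two_eq_succ_fin {n : ℕ} : (2 : Fin (n + 3)) = Fin.succ (Fin.succ 0) := rfl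

theorem zero_ne_two_fin {n : ℕ} : (0 : Fin (n + 3)) ≠ 2 :=
  two_eq_succ_fin ▸ (Fin.succ_ne_zero _).symm

theorem one_ne_two_fin {n : ℕ} : (1 : Fin (n + 3)) ≠ 2 := fun h =>
  (Fin.succ_ne_zero (0 : Fin (n + 1))).symm (Fin.succ_injective _ (h.trans two_eq_succ_fin))

/-- The indicator of `0`, with values in `ZMod 2`. -/
def zeroIndicator {E : Type*} [Zero E] [DecidableEq E] (x : E) : ZMod 2 := if x = 0 then 1 else 0

/-- The indicator of the vanishing of all coordinates but the first two. -/
def tailIndicator {m : ℕ} (x : Fin (m + 2) → ZMod 2) : ZMod 2 :=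
  zeroIndicator fun j : Fin m => x j.succ.succ

/-- A parametrization of the `i`-th block of an aperiodic logarithmic signature of the
elementary abelian `2`-group `∏ i, 𝔽₂ ^ (l i + 2)`: the graph of a nonlinear function on the
`i`-th factor. -/
def blockMap {n : ℕ} (l : Fin (n + 3) → ℕ) (i : Fin (n + 3)) (x : Fin (l i + 2) → ZMod 2) :
    (i : Fin (n + 3)) → Fin (l i + 2) → ZMod 2 :=
  Pi.single i x +
    if i = 0 then
      Pi.single 1 (Pi.single 0 (x 0 * tailIndicator x)) +
        Pi.single 2 (Pi.single 0 (x 1 * tailIndicator x))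
    else if i = 1 then Pi.single 0 (Pi.single 1 (zeroIndicator x))
    else if i = 2 then
      Pi.single 0 (Pi.single 0 (zeroIndicator x)) + Pi.single 1 (Pi.single 0 (zeroIndicator x))
    else Pi.single 0 (Pi.single 0 (zeroIndicator x))

theorem blockMap_apply_self {n : ℕ} (l : Fin (n + 3) → ℕ) (i : Fin (n + 3))
    (x : Fin (l i + 2) → ZMod 2) : blockMap l i x i = x := by
  have h01 : (0 : Fin (n + 3)) ≠ 1 := zero_ne_one
  have h02 : (0 : Fin (n + 3)) ≠ 2 := zero_ne_two_fin
  have h12 : (1 : Fin (n + 3)) ≠ 2 := one_ne_two_fin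
  unfold blockMap
  split_ifs with h0 h1 h2
  · subst h0; simp [h01, h02]
  · subst h1; simp [h01.symm]
  · subst h2; simp [h02.symm, h12.symm]
  · simp [Pi.single_eq_of_ne h0]

section Sum

variable {n : ℕ} {l : Fin (n + 3) → ℕ}

theorem blockMap_succ (j : Fin n) (x : Fin (l j.succ.succ.succ + 2) → ZMod 2) :
    blockMap l j.succ.succ.succ x =
      Pi.single j.succ.succ.succ x + Pi.single 0 (Pi.single 0 (zeroIndicator x)) := by
  have h1 : j.succ.succ.succ ≠ 1 := fun h => Fin.succ_ne_zero _ (Fin.succ_injective _ h)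
  have h2 : j.succ.succ.succ ≠ 2 := fun h => Fin.succ_ne_zero j
    (Fin.succ_injective _ (Fin.succ_injective _ (h.trans two_eq_succ_fin)))
  simp [blockMap, h1, h2]

variable (x : (i : Fin (n + 3)) → Fin (l i + 2) → ZMod 2)

theorem sum_blockMap : ∑ i, blockMap l i (x i) = x +
    (Pi.single 0 (Pi.single 1 (zeroIndicator (x 1)) +
        Pi.single 0 (zeroIndicator (x 2) + ∑ j : Fin n, zeroIndicator (x j.succ.succ.succ))) +
      Pi.single 1 (Pi.single 0 (x 0 0 * tailIndicator (x 0) + zeroIndicator (x 2))) +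
      Pi.single 2 (Pi.single 0 (x 0 1 * tailIndicator (x 0)))) := by
  have h02 : (0 : Fin (n + 3)) ≠ 2 := zero_ne_two_fin
  have h12 : (1 : Fin (n + 3)) ≠ 2 := one_ne_two_fin
  have hx : x = ∑ i, Pi.single i (x i) := (Finset.univ_sum_single x).symm
  conv_rhs =>
    lhs
    rw [hx]
  have hs (f : Fin (n + 3) → (i : Fin (n + 3)) → Fin (l i + 2) → ZMod 2) :
      ∑ i, f i = f 0 + (f 1 + (f 2 + ∑ j : Fin n, f j.succ.succ.succ)) := by
    rw [two_eq_succ_fin]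
    simp [Fin.sum_univ_succ]
  rw [hs, hs]
  have b0 : blockMap l 0 (x 0) = Pi.single 0 (x 0) +
      (Pi.single 1 (Pi.single 0 (x 0 0 * tailIndicator (x 0))) +
        Pi.single 2 (Pi.single 0 (x 0 1 * tailIndicator (x 0)))) := by simp [blockMap]
  have b1 : blockMap l 1 (x 1) =
      Pi.single 1 (x 1) + Pi.single 0 (Pi.single 1 (zeroIndicator (x 1))) := by
    simp [blockMap]
  have b2 : blockMap l 2 (x 2) = Pi.single 2 (x 2) +
      (Pi.single 0 (Pi.single 0 (zeroIndicator (x 2))) +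
        Pi.single 1 (Pi.single 0 (zeroIndicator (x 2)))) := by
    simp [blockMap, h02.symm, h12.symm]
  have hR : ∑ j : Fin n, (Pi.single 0 (Pi.single 0 (zeroIndicator (x j.succ.succ.succ))) :
      (i : Fin (n + 3)) → Fin (l i + 2) → ZMod 2) =
      Pi.single 0 (Pi.single 0 (∑ j : Fin n, zeroIndicator (x j.succ.succ.succ))) := by
    simp only [← AddMonoidHom.single_apply, map_sum]
  simp only [b0, b1, b2, blockMap_succ, Finset.sum_add_distrib, hR, Pi.single_add]
  abel

end Sum

theorem tailIndicator_eq_zero_or_one {m : ℕ} (x : Fin (m + 2) → ZMod 2) :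
    tailIndicator x = 0 ∨ tailIndicator x = 1 := by
  unfold tailIndicator zeroIndicator
  split_ifs <;> simp

theorem sum_blockMap_injective {n : ℕ} (l : Fin (n + 3) → ℕ) :
    Function.Injective fun x : (i : Fin (n + 3)) → Fin (l i + 2) → ZMod 2 =>
      ∑ i, blockMap l i (x i) := by
  intro x y hxy
  have hrest (j : Fin n) : x j.succ.succ.succ = y j.succ.succ.succ := by
    have h1 : j.succ.succ.succ ≠ 1 := fun h => Fin.succ_ne_zero _ (Fin.succ_injective _ h)
    have h2 : j.succ.succ.succ ≠ 2 := fun h => Fin.succ_ne_zero j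
      (Fin.succ_injective _ (Fin.succ_injective _ (h.trans two_eq_succ_fin)))
    simpa only [sum_blockMap, Pi.add_apply, ne_eq, h1, h2, Fin.succ_ne_zero, not_false_eq_true,
      Pi.single_eq_of_ne, add_zero] using congrFun hxy j.succ.succ.succ
  have e0 := congrFun hxy 0
  have e1 := congrFun hxy 1
  have e2 := congrFun hxy 2
  have h02 : (0 : Fin (n + 3)) ≠ 2 := zero_ne_two_fin
  have h12 : (1 : Fin (n + 3)) ≠ 2 := one_ne_two_fin
  simp only [sum_blockMap, Pi.add_apply, Pi.single_eq_same, hrest, ne_eq, h02, h12, h02.symm,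
    h12.symm, zero_ne_one, one_ne_zero, not_false_eq_true, Pi.single_eq_of_ne, add_zero, zero_add]
    at e0 e1 e2
  have htail (j : Fin (l 0)) : x 0 j.succ.succ = y 0 j.succ.succ := by
    have h1 : j.succ.succ ≠ 1 := by simp [Fin.ext_iff]
    simpa [h1] using congrFun e0 j.succ.succ
  have hτ : tailIndicator (x 0) = tailIndicator (y 0) := by simp only [tailIndicator, htail]
  have e00 : x 0 0 + zeroIndicator (x 2) = y 0 0 + zeroIndicator (y 2) := by
    simpa [← add_assoc] using congrFun e0 0
  have e01 : x 0 1 + zeroIndicator (x 1) = y 0 1 + zeroIndicator (y 1) := by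
    simpa using congrFun e0 1
  rw [hτ] at e1 e2
  have key : x 0 0 = y 0 0 ∧ x 0 1 = y 0 1 ∧ x 1 = y 1 ∧ x 2 = y 2 := by
    rcases tailIndicator_eq_zero_or_one (y 0) with h | h
    · simp only [h, mul_zero, Pi.single_zero, add_zero, zero_add] at e1 e2
      have h1 : x 1 = y 1 := by simpa [e2] using e1
      exact ⟨by simpa [e2] using e00, by simpa [h1] using e01, h1, e2⟩
    · simp only [h, mul_one, e00] at e1 e2
      have h1 : x 1 = y 1 := by simpa using e1
      have h01 : x 0 1 = y 0 1 := by simpa [h1] using e01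
      have h2 : x 2 = y 2 := by simpa [h01] using e2
      exact ⟨by simpa [h2] using e00, h01, h1, h2⟩
  obtain ⟨k00, k01, k1, k2⟩ := key
  funext i
  refine Fin.cases ?_ (Fin.cases k1 (Fin.cases k2 hrest)) i
  funext j
  exact Fin.cases k00 (Fin.cases k01 htail) j

/-- The range of a section `φ` of an additive map has no nonzero period, provided that no
nonzero `u` makes `φ (x + u) - φ x` independent of `x`. -/
theorem eq_zero_of_forall_exists_add_eq {E M : Type*} [AddCommGroup E] [AddCommGroup M]
    (φ : E → M) (π : M →+ E) (hπ : ∀ x, π (φ x) = x)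
    (hφ : ∀ u, (∀ x y, φ (x + u) - φ x = φ (y + u) - φ y) → u = 0)
    {g : M} (hg : ∀ x, ∃ y, φ y = g + φ x) : g = 0 := by
  have h (x : E) : g = φ (x + π g) - φ x := by
    obtain ⟨y, hy⟩ := hg x
    have hxy : y = x + π g := by rw [← hπ y, hy, map_add, hπ, add_comm]
    rw [← hxy, hy, add_sub_cancel_right]
  have hu : π g = 0 := hφ _ fun x y => (h x).symm.trans (h y)
  simpa [hu] using h 0

theorem eq_zero_of_zeroIndicator_add {m : ℕ} {u : Fin (m + 2) → ZMod 2}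
    (h : ∀ x y, zeroIndicator (x + u) - zeroIndicator x =
      zeroIndicator (y + u) - zeroIndicator y) : u = 0 := by
  by_contra hu
  have hcard : ({0, u} : Finset (Fin (m + 2) → ZMod 2)).card <
      (Finset.univ : Finset (Fin (m + 2) → ZMod 2)).card := by
    refine Finset.card_le_two.trans_lt ?_
    have := Nat.one_le_two_pow (n := m)
    simp [pow_add]
    omega
  obtain ⟨y, -, hy⟩ := Finset.exists_mem_notMem_of_card_lt_card hcard
  simp only [Finset.mem_insert, Finset.mem_singleton, not_or] at hy
  have hyu : y + u ≠ 0 := fun H => hy.2 (by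
    rw [eq_neg_of_add_eq_zero_left H]; funext j; simp)
  have := h 0 y
  simp [zeroIndicator, hu, hy.1, hyu] at this

theorem eq_zero_of_mul_tailIndicator_add {m : ℕ} (hm : 1 ≤ m) {u : Fin (m + 2) → ZMod 2}
    (h0 : ∀ x y : Fin (m + 2) → ZMod 2,
      (x + u) 0 * tailIndicator (x + u) - x 0 * tailIndicator x =
        (y + u) 0 * tailIndicator (y + u) - y 0 * tailIndicator y)
    (h1 : ∀ x y : Fin (m + 2) → ZMod 2,
      (x + u) 1 * tailIndicator (x + u) - x 1 * tailIndicator x =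
        (y + u) 1 * tailIndicator (y + u) - y 1 * tailIndicator y) : u = 0 := by
  have htail : (fun j : Fin m => u j.succ.succ) = 0 := by
    by_contra hu
    have := h0 0 (Pi.single 0 1)
    have hne (j : Fin m) : (j.succ.succ : Fin (m + 2)) ≠ 0 := Fin.succ_ne_zero _
    simp [tailIndicator, zeroIndicator, hu, hne] at this
    simp [← Pi.zero_def] at this
  have ht (j : Fin m) : u j.succ.succ = 0 := congrFun htail j
  obtain ⟨m, rfl⟩ := Nat.exists_eq_add_of_le' hm
  have hne : (fun j : Fin (m + 1) => (Pi.single 2 1 : Fin (m + 1 + 2) → ZMod 2) j.succ.succ) ≠ 0 :=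
    fun H => by simpa using congrFun H 0
  have k0 := h0 0 (Pi.single 2 1)
  have k1 := h1 0 (Pi.single 2 1)
  simp [tailIndicator, zeroIndicator, ht, hne, ← Pi.zero_def] at k0 k1
  funext j
  exact Fin.cases k0 (Fin.cases k1 ht) j

theorem eq_zero_of_blockMap_add {n : ℕ} (l : Fin (n + 3) → ℕ) (hl : 1 ≤ l 0) (i : Fin (n + 3))
    (u : Fin (l i + 2) → ZMod 2)
    (h : ∀ x y, blockMap l i (x + u) - blockMap l i x = blockMap l i (y + u) - blockMap l i y) :
    u = 0 := by
  have h01 : (0 : Fin (n + 3)) ≠ 1 := zero_ne_one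
  have h02 : (0 : Fin (n + 3)) ≠ 2 := zero_ne_two_fin
  have h12 : (1 : Fin (n + 3)) ≠ 2 := one_ne_two_fin
  by_cases h0 : i = 0
  · subst h0
    refine eq_zero_of_mul_tailIndicator_add hl (fun x y => ?_) fun x y => ?_
    · simpa [blockMap, h01.symm, h12] using congrFun (congrFun (h x y) 1) 0
    · simpa [blockMap, h02.symm, h12.symm] using congrFun (congrFun (h x y) 2) 0
  refine eq_zero_of_zeroIndicator_add fun x y => ?_
  by_cases h1 : i = 1
  · subst h1
    simpa [blockMap, h01] using congrFun (congrFun (h x y) 0) 1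
  by_cases h2 : i = 2
  · subst h2
    simpa [blockMap, h01, h02, h02.symm, h12.symm] using congrFun (congrFun (h x y) 0) 0
  · simpa [blockMap, h0, h1, h2, Pi.single_eq_of_ne (Ne.symm h0)] using
      congrFun (congrFun (h x y) 0) 0

/-- A group of exponent two is isomorphic to every `𝔽₂`-vector space of the same cardinality. -/
theorem nonempty_mulEquiv_of_mul_self {G M : Type*} [Group G] [Fintype G] (hG : ∀ g : G, g * g = 1)
    [AddCommGroup M] [Module (ZMod 2) M] [Fintype M] (hcard : Fintype.card M = Fintype.card G) :
    Nonempty (Multiplicative M ≃* G) := by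
  let : CommGroup G := { ‹Group G› with
    mul_comm := fun a b => mul_inv_eq_one.mp (by
      have inv_eq (g : G) : g⁻¹ = g := inv_eq_of_mul_eq_one_left (hG g)
      rw [mul_inv_rev, inv_eq, inv_eq, hG]) }
  let : Module (ZMod 2) (Additive G) := AddCommGroup.zmodModule (n := 2) fun g => by
    rw [two_nsmul]; exact hG g.toMul
  have hfin : Module.finrank (ZMod 2) M = Module.finrank (ZMod 2) (Additive G) := by
    have hc := hcard.trans (Fintype.card_congr (Additive.ofMul (α := G)))
    rw [Module.card_eq_pow_finrank (K := ZMod 2) (V := M),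
      Module.card_eq_pow_finrank (K := ZMod 2) (V := Additive G), ZMod.card] at hc
    exact Nat.pow_right_injective le_rfl hc
  exact ⟨AddEquiv.toMultiplicativeLeft (LinearEquiv.ofFinrankEq M (Additive G) hfin).toAddEquiv⟩

theorem exists_eq_two_pow_of_dvd_card {G : Type*} [Group G] [Fintype G] (hG : ∀ g : G, g * g = 1)
    {d : ℕ} (hd : d ∣ Fintype.card G) : ∃ k, d = 2 ^ k := by
  have hp : IsPGroup 2 G := fun g => ⟨1, by rw [pow_one, pow_two, hG]⟩
  obtain ⟨n, hn⟩ := IsPGroup.iff_card.mp hp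
  rw [← Nat.card_eq_fintype_card, hn] at hd
  obtain ⟨k, -, hk⟩ := (Nat.dvd_prime_pow Nat.prime_two).mp hd
  exact ⟨k, hk⟩

/-- Injective parametrizations of the blocks whose sum is a bijection give a logarithmic
signature. -/
theorem isLogSig_image {G M : Type*} [Group G] [DecidableEq G] [AddCommGroup M]
    (ψ : Multiplicative M ≃* G) {s : ℕ} {E : Fin s → Type*} [∀ i, Fintype (E i)]
    (φ : (i : Fin s) → E i → M)
    (hφ : Function.Bijective fun x : (i : Fin s) → E i => ∑ i, φ i (x i)) :
    IsLogSig fun i => Finset.univ.image fun x => ψ (Multiplicative.ofAdd (φ i x)) := by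
  have hprod (x : (i : Fin s) → E i) :
      (List.ofFn fun i => ψ (Multiplicative.ofAdd (φ i (x i)))).prod =
        ψ (Multiplicative.ofAdd (∑ i, φ i (x i))) := by
    rw [ofAdd_sum, ← List.prod_ofFn, map_list_prod, List.map_ofFn]
    rfl
  intro g
  obtain ⟨x, hx⟩ := hφ.2 (ψ.symm g).toAdd
  refine ⟨fun i => ψ (Multiplicative.ofAdd (φ i (x i))), ⟨fun i => ?_, ?_⟩, ?_⟩
  · exact Finset.mem_image_of_mem _ (Finset.mem_univ _)
  · rw [hprod]
    simp only at hx
    simp [hx]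
  · rintro f ⟨hf, hfg⟩
    simp only [Finset.mem_image, Finset.mem_univ, true_and] at hf
    choose y hy using hf
    obtain rfl : (fun i => ψ (Multiplicative.ofAdd (φ i (y i)))) = f := funext hy
    rw [hprod] at hfg
    have : y = x := hφ.1 (hx.trans (by rw [← hfg]; simp)).symm
    rw [this]

/-- Every elementary abelian 2-group of order `r₁ ⋯ r_s`, where `s ≥ 3`,
`r₁ ≥ ⋯ ≥ r_s ≥ 2`, `r₁ ≥ 8` and `r_s ≥ 4`, has an aperiodic logarithmic signature
of type `(r₁, …, r_s)`. -/
theorem stmt5 {G : Type*} [Group G] [Fintype G] [DecidableEq G]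
    (hG : ∀ g : G, g * g = 1)
    (s : ℕ) (hs : 3 ≤ s) (r : Fin s → ℕ)
    (hanti : ∀ i j : Fin s, i ≤ j → r j ≤ r i)
    (h2 : ∀ i, 2 ≤ r i)
    (h8 : 8 ≤ r ⟨0, by omega⟩) (h4 : 4 ≤ r ⟨s - 1, by omega⟩)
    (hcard : Fintype.card G = ∏ i, r i) :
    ∃ B : Fin s → Finset G, IsLogSig B ∧ (∀ i, (B i).card = r i) ∧
      ∀ i, ¬ IsPeriodic (B i) := by
  obtain ⟨n, rfl⟩ := Nat.exists_eq_add_of_le' hs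
  have hr (i : Fin (n + 3)) : 4 ≤ r i :=
    h4.trans (hanti _ _ (Fin.mk_le_mk.mpr (Nat.le_sub_one_of_lt i.isLt)))
  have hpow (i : Fin (n + 3)) : ∃ m, r i = 2 ^ (m + 2) := by
    obtain ⟨k, hk⟩ := exists_eq_two_pow_of_dvd_card hG
      (hcard ▸ Finset.dvd_prod_of_mem r (Finset.mem_univ i))
    have h := hr i
    rw [hk, show 4 = 2 ^ 2 from rfl, Nat.pow_le_pow_iff_right (by norm_num)] at h
    exact ⟨k - 2, by rw [hk, Nat.sub_add_cancel h]⟩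
  choose l hl using hpow
  have hl0 : 1 ≤ l 0 := by
    have h : 2 ^ 3 ≤ r 0 := h8
    rw [hl, Nat.pow_le_pow_iff_right (by norm_num)] at h
    omega
  obtain ⟨ψ⟩ := nonempty_mulEquiv_of_mul_self (M := (i : Fin (n + 3)) → Fin (l i + 2) → ZMod 2) hG
    (by simp [hcard, hl])
  have hinj (i : Fin (n + 3)) :
      Function.Injective fun x => ψ (Multiplicative.ofAdd (blockMap l i x)) :=
    ψ.injective.comp (Multiplicative.ofAdd.injective.comp
      (Function.LeftInverse.injective
        (g := fun v : (i : Fin (n + 3)) → Fin (l i + 2) → ZMod 2 => v i) (blockMap_apply_self l i)))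
  refine ⟨_, isLogSig_image ψ (blockMap l)
    (Finite.injective_iff_bijective.mp (sum_blockMap_injective l)), fun i => ?_, fun i => ?_⟩
  · rw [Finset.card_image_of_injective _ (hinj i)]
    simp [hl]
  · rintro ⟨g, hg, hgB⟩
    apply hg
    suffices h : (ψ.symm g).toAdd = 0 by simpa using h
    refine eq_zero_of_forall_exists_add_eq (blockMap l i) (Pi.evalAddMonoidHom _ i)
      (blockMap_apply_self l i) (eq_zero_of_blockMap_add l hl0 i) fun x => ?_
    have hmem : g * ψ (Multiplicative.ofAdd (blockMap l i x)) ∈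
        Finset.univ.image fun x => ψ (Multiplicative.ofAdd (blockMap l i x)) := by
      rw [← hgB]
      exact Finset.mem_image_of_mem _ (Finset.mem_image_of_mem _ (Finset.mem_univ x))
    obtain ⟨y, -, hy⟩ := Finset.mem_image.mp hmem
    refine ⟨y, ?_⟩
    have := congrArg (fun a => (ψ.symm a).toAdd) hy
    simpa using this
end
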